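/- Any triangulation of the graph associated with a convex polyomino is word-representable if and only if it is 3-colorable. -/

import Mathlib

/-- Two letters `x ≠ y` alternate in the word `w` if, after deleting all other letters,
consecutive letters are always distinct (i.e. the result is `xyxy...` or `yxyx...`). -/
def Alternate {V : Type*} [DecidableEq V] (w : List V) (x y : V) : Prop :=
  (w.filter (fun z => z = x ∨ z = y)).Chain' (· ≠ ·)

/-- A graph is word-representable if some word over its vertex alphabet, containing every
vertex, is such that two distinct letters alternate iff they are adjacent. -/
def WordRepresentable {V : Type*} [DecidableEq V] (G : SimpleGraph V) : Prop :=
  ∃ w : List V, (∀ v : V, v ∈ w) ∧ ∀ x y : V, x ≠ y → (Alternate w x y ↔ G.Adj x y)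

/-- Two cells of a polyomino are adjacent if they share a side. -/
def CellAdj (a b : ℤ × ℤ) : Prop :=
  (a.1 = b.1 ∧ (a.2 = b.2 + 1 ∨ b.2 = a.2 + 1)) ∨
  (a.2 = b.2 ∧ (a.1 = b.1 + 1 ∨ b.1 = a.1 + 1))

/-- A polyomino: a nonempty finite set of unit cells (a cell is named by its lower-left
corner) that is connected under side-adjacency of cells. -/
def IsPolyomino (P : Finset (ℤ × ℤ)) : Prop :=
  P.Nonempty ∧ ∀ a ∈ P, ∀ b ∈ P,
    Relation.ReflTransGen (fun c c' => c ∈ P ∧ c' ∈ P ∧ CellAdj c c') a b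

/-- A convex polyomino: a polyomino whose intersection with every horizontal line and with
every vertical line is connected. -/
def IsConvexPolyomino (P : Finset (ℤ × ℤ)) : Prop :=
  IsPolyomino P ∧
  (∀ x y₁ y₂ y : ℤ, (x, y₁) ∈ P → (x, y₂) ∈ P → y₁ ≤ y → y ≤ y₂ → (x, y) ∈ P) ∧
  (∀ y x₁ x₂ x : ℤ, (x₁, y) ∈ P → (x₂, y) ∈ P → x₁ ≤ x → x ≤ x₂ → (x, y) ∈ P)

/-- The lattice points of a polyomino: the corners of its cells. These are the vertices of
the associated graph. -/
def latticePts (P : Finset (ℤ × ℤ)) : Set (ℤ × ℤ) :=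
  {p | ∃ c ∈ P, p = c ∨ p = (c.1 + 1, c.2) ∨ p = (c.1, c.2 + 1) ∨ p = (c.1 + 1, c.2 + 1)}

/-- The edges of a triangulation of the graph associated with the polyomino `P` (before
symmetrisation): the horizontal unit segments bounding a cell of `P`, the vertical unit
segments bounding a cell of `P`, and, in each cell `c ∈ P`, the diagonal chosen by `t`
(`true` gives the diagonal `c—(c.1+1, c.2+1)`, `false` gives `(c.1+1, c.2)—(c.1, c.2+1)`). -/
def triRel (P : Finset (ℤ × ℤ)) (t : ℤ × ℤ → Bool) (p q : ℤ × ℤ) : Prop :=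
  (q = (p.1 + 1, p.2) ∧ ((p.1, p.2) ∈ P ∨ (p.1, p.2 - 1) ∈ P)) ∨
  (q = (p.1, p.2 + 1) ∧ ((p.1, p.2) ∈ P ∨ (p.1 - 1, p.2) ∈ P)) ∨
  (∃ c ∈ P, (t c = true ∧ p = c ∧ q = (c.1 + 1, c.2 + 1)) ∨
            (t c = false ∧ p = (c.1 + 1, c.2) ∧ q = (c.1, c.2 + 1)))

/-- The triangulation (determined by the choice `t` of a diagonal in each cell) of the
graph associated with the polyomino `P`, as a graph on the lattice points of `P`. -/
def polyTri (P : Finset (ℤ × ℤ)) (t : ℤ × ℤ → Bool) : SimpleGraph (latticePts P) :=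
  (SimpleGraph.fromRel (triRel P t)).induce (latticePts P)

/-! ### Alternation in terms of letter counts -/

/-- Difference-of-counts form of alternation. -/
def CloseFun {ι : Type*} (f g : ι → ℤ) : Prop :=
  ∃ c : ℤ, ∀ k, c ≤ f k - g k ∧ f k - g k ≤ c + 1

/-- Number of occurrences of `a` among the first `k` letters. -/
def cnt {V : Type*} [DecidableEq V] (w : List V) (a : V) (k : ℕ) : ℤ := ((w.take k).count a : ℤ)

lemma cnt_chain {V : Type*} [DecidableEq V] (l : List V) : ∀ (a b : V), a ≠ b →
    ((∀ k, 0 ≤ cnt l a k - cnt l b k ∧ cnt l a k - cnt l b k ≤ 1) ↔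
      (b :: l.filter (fun z => z = a ∨ z = b)).IsChain (· ≠ ·)) := by
  induction l with
  | nil => intro a b hab; simp [cnt]
  | cons z l ih =>
    intro a b hab
    have hk : (∀ k, 0 ≤ cnt (z :: l) a k - cnt (z :: l) b k ∧
        cnt (z :: l) a k - cnt (z :: l) b k ≤ 1) ↔
        (∀ k, 0 ≤ cnt (z :: l) a (k+1) - cnt (z :: l) b (k+1) ∧
        cnt (z :: l) a (k+1) - cnt (z :: l) b (k+1) ≤ 1) := by
      constructor
      · intro h k; exact h (k+1)
      · intro h k
        cases k with
        | zero => simp [cnt]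
        | succ k => exact h k
    rw [hk]
    have hc : ∀ d k, cnt (z :: l) d (k+1) = cnt l d k + (if z = d then 1 else 0) := by
      intro d k
      simp only [cnt, List.take_succ_cons, List.count_cons, beq_iff_eq]
      split_ifs <;> simp
    simp only [hc]
    by_cases hza : z = a
    · subst hza
      have hf : (z :: l).filter (fun y => y = z ∨ y = b) =
          z :: l.filter (fun y => y = b ∨ y = z) := by
        simp [List.filter_cons, or_comm]
      rw [hf, List.isChain_cons_cons, ← ih b z (Ne.symm hab)]
      simp only [if_true, if_neg hab]
      constructor
      · intro h
        refine ⟨Ne.symm hab, fun k => ?_⟩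
        have := h k
        omega
      · intro h k
        have := h.2 k
        omega
    · by_cases hzb : z = b
      · subst hzb
        have hf : (z :: l).filter (fun y => y = a ∨ y = z) =
            z :: l.filter (fun y => y = a ∨ y = z) := by
          simp [List.filter_cons]
        rw [hf, List.isChain_cons_cons]
        constructor
        · intro h
          have := h 0
          simp [cnt, hza] at this
        · intro h; exact absurd rfl h.1
      · have hf : (z :: l).filter (fun y => y = a ∨ y = b) =
            l.filter (fun y => y = a ∨ y = b) := by
          simp [List.filter_cons, hza, hzb]
        rw [hf, ← ih a b hab]
        simp [hza, hzb]

lemma alternate_iff {V : Type*} [DecidableEq V] (w : List V) (a b : V) (hab : a ≠ b) :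
    Alternate w a b ↔ CloseFun (cnt w a) (cnt w b) := by
  have h1 := cnt_chain w a b hab
  have h2 := cnt_chain w b a (Ne.symm hab)
  have hsw : w.filter (fun z => z = b ∨ z = a) = w.filter (fun z => z = a ∨ z = b) := by
    congr 1; funext z; simp [or_comm]
  rw [hsw] at h2
  have hA : Alternate w a b ↔
      ((b :: w.filter (fun z => z = a ∨ z = b)).IsChain (· ≠ ·) ∨
       (a :: w.filter (fun z => z = a ∨ z = b)).IsChain (· ≠ ·)) := by
    change (w.filter (fun z => z = a ∨ z = b)).IsChain (· ≠ ·) ↔ _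
    have hm : ∀ z ∈ w.filter (fun z => z = a ∨ z = b), z = a ∨ z = b := by
      intro z hz; simpa using (List.mem_filter.1 hz).2
    generalize w.filter (fun z => z = a ∨ z = b) = m at hm
    cases m with
    | nil => simp
    | cons z m =>
      rw [List.isChain_cons_cons, List.isChain_cons_cons]
      rcases hm z (by simp) with rfl | rfl
      · simp [Ne.symm hab]
      · simp [hab]
  rw [hA, ← h1, ← h2]
  constructor
  · rintro (h | h)
    · exact ⟨0, fun k => by have := h k; omega⟩
    · exact ⟨-1, fun k => by have := h k; omega⟩
  · rintro ⟨c, h⟩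
    have h0 := h 0
    simp only [cnt, List.take_zero, List.count_nil] at h0
    have : c = 0 ∨ c = -1 := by omega
    rcases this with rfl | rfl
    · left; intro k; have := h k; omega
    · right; intro k; have := h k; omega

/-! ### Neighbourhoods are comparability graphs -/

/-- Functions close to a common function, normalised: closeness is comparability. -/
lemma close_norm {ι : Type*} (v f : ι → ℤ) (h : CloseFun v f) :
    ∃ s : ℤ, ∀ k, v k - 1 ≤ f k + s ∧ f k + s ≤ v k := by
  obtain ⟨c, hc⟩ := h
  exact ⟨c, fun k => by have := hc k; omega⟩

lemma close_iff_comparable {ι α : Type*} (n : α → ι → ℤ) (v : α) :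
    ∃ F : α → ι → ℤ, ∀ a b, CloseFun (n v) (n a) → CloseFun (n v) (n b) →
      (CloseFun (n a) (n b) ↔ (F a ≤ F b ∨ F b ≤ F a)) := by
  classical
  have : ∀ a, ∃ s : ℤ, CloseFun (n v) (n a) → ∀ k, n v k - 1 ≤ n a k + s ∧ n a k + s ≤ n v k := by
    intro a
    by_cases h : CloseFun (n v) (n a)
    · obtain ⟨s, hs⟩ := close_norm _ _ h
      exact ⟨s, fun _ => hs⟩
    · exact ⟨0, fun h' => absurd h' h⟩
  choose s hs using this
  refine ⟨fun a k => n a k + s a, fun a b ha hb => ?_⟩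
  have ha := hs a ha
  have hb := hs b hb
  constructor
  · rintro ⟨c, hc⟩
    by_cases h : 0 ≤ c + s a - s b
    · right; intro k; have := hc k; dsimp only; omega
    · left; intro k; have := hc k; dsimp only; omega
  · rintro (h | h)
    · refine ⟨s b - s a - 1, fun k => ?_⟩
      have h1 : n a k + s a ≤ n b k + s b := h k
      have := ha k; have := hb k; omega
    · refine ⟨s b - s a, fun k => ?_⟩
      have h1 : n b k + s b ≤ n a k + s a := h k
      have := ha k; have := hb k; omega

lemma no_five {β : Type*} [Preorder β] (C : β → β → Prop) (hC : ∀ a b, C a b ↔ (a ≤ b ∨ b ≤ a))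
    (a b c d e : β)
    (h1 : C a b) (h2 : C b c) (h3 : C c d) (h4 : C d e) (h5 : C e a)
    (n1 : ¬ C a c) (n2 : ¬ C b d) (n3 : ¬ C c e) (n4 : ¬ C d a) (n5 : ¬ C e b) : False := by
  have key : ∀ x y z : β, C y z → ¬ C x z → x ≤ y → z ≤ y ∧ ¬ (y ≤ z) := by
    intro x y z hyz hxz hxy
    have : ¬ y ≤ z := fun h => hxz ((hC _ _).2 (Or.inl (hxy.trans h)))
    exact ⟨((hC _ _).1 hyz).resolve_left this, this⟩
  have key' : ∀ x y z : β, C y z → ¬ C x z → y ≤ x → y ≤ z ∧ ¬ (z ≤ y) := by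
    intro x y z hyz hxz hxy
    have : ¬ z ≤ y := fun h => hxz ((hC _ _).2 (Or.inr (h.trans hxy)))
    exact ⟨((hC _ _).1 hyz).resolve_right this, this⟩
  rcases (hC _ _).1 h1 with h | h
  · have q1 := key _ _ _ h2 n1 h
    have q2 := key' _ _ _ h3 n2 q1.1
    have q3 := key _ _ _ h4 n3 q2.1
    have q4 := key' _ _ _ h5 n4 q3.1
    exact (key _ _ _ h1 n5 q4.1).2 h
  · have q1 := key' _ _ _ h2 n1 h
    have q2 := key _ _ _ h3 n2 q1.1
    have q3 := key' _ _ _ h4 n3 q2.1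
    have q4 := key _ _ _ h5 n4 q3.1
    exact (key' _ _ _ h1 n5 q4.1).2 h

lemma no_seven {β : Type*} [Preorder β] (C : β → β → Prop) (hC : ∀ a b, C a b ↔ (a ≤ b ∨ b ≤ a))
    (a b c d e f g : β)
    (h1 : C a b) (h2 : C b c) (h3 : C c d) (h4 : C d e) (h5 : C e f) (h6 : C f g) (h7 : C g a)
    (n1 : ¬ C a c) (n2 : ¬ C b d) (n3 : ¬ C c e) (n4 : ¬ C d f) (n5 : ¬ C e g) (n6 : ¬ C f a)
    (n7 : ¬ C g b) : False := by
  have key : ∀ x y z : β, C y z → ¬ C x z → x ≤ y → z ≤ y ∧ ¬ (y ≤ z) := by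
    intro x y z hyz hxz hxy
    have : ¬ y ≤ z := fun h => hxz ((hC _ _).2 (Or.inl (hxy.trans h)))
    exact ⟨((hC _ _).1 hyz).resolve_left this, this⟩
  have key' : ∀ x y z : β, C y z → ¬ C x z → y ≤ x → y ≤ z ∧ ¬ (z ≤ y) := by
    intro x y z hyz hxz hxy
    have : ¬ z ≤ y := fun h => hxz ((hC _ _).2 (Or.inr (h.trans hxy)))
    exact ⟨((hC _ _).1 hyz).resolve_right this, this⟩
  rcases (hC _ _).1 h1 with h | h
  · have q1 := key _ _ _ h2 n1 h
    have q2 := key' _ _ _ h3 n2 q1.1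
    have q3 := key _ _ _ h4 n3 q2.1
    have q4 := key' _ _ _ h5 n4 q3.1
    have q5 := key _ _ _ h6 n5 q4.1
    have q6 := key' _ _ _ h7 n6 q5.1
    exact (key _ _ _ h1 n7 q6.1).2 h
  · have q1 := key' _ _ _ h2 n1 h
    have q2 := key _ _ _ h3 n2 q1.1
    have q3 := key' _ _ _ h4 n3 q2.1
    have q4 := key _ _ _ h5 n4 q3.1
    have q5 := key' _ _ _ h6 n5 q4.1
    have q6 := key _ _ _ h7 n6 q5.1
    exact (key' _ _ _ h1 n7 q6.1).2 h

/-! ### Word-representable implies the parity condition -/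

lemma triRel_far (P : Finset (ℤ × ℤ)) (t : ℤ × ℤ → Bool) (p q : ℤ × ℤ) (h : triRel P t p q) :
    (q.1 = p.1 + 1 ∧ q.2 = p.2) ∨ (q.1 = p.1 ∧ q.2 = p.2 + 1) ∨
    (q.1 = p.1 + 1 ∧ q.2 = p.2 + 1 ∧ t p = true) ∨
    (q.1 + 1 = p.1 ∧ q.2 = p.2 + 1 ∧ t (q.1, p.2) = false) := by
  rcases h with ⟨h, -⟩ | ⟨h, -⟩ | ⟨c, -, ⟨h1, h2, h3⟩ | ⟨h1, h2, h3⟩⟩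
  · subst h; simp
  · subst h; simp
  · subst h2 h3; simp [h1]
  · subst h2 h3; simp [h1]

/-- Symmetrised adjacency on the plane. -/
def tAdj (P : Finset (ℤ × ℤ)) (t : ℤ × ℤ → Bool) (p q : ℤ × ℤ) : Prop :=
  triRel P t p q ∨ triRel P t q p

lemma tAdj_symm {P : Finset (ℤ × ℤ)} {t : ℤ × ℤ → Bool} {p q : ℤ × ℤ} (h : tAdj P t p q) :
    tAdj P t q p := Or.symm h

lemma tAdj_far_x {P : Finset (ℤ × ℤ)} {t : ℤ × ℤ → Bool} {x y x' y' : ℤ}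
    (h : x + 2 ≤ x' ∨ x' + 2 ≤ x ∨ y + 2 ≤ y' ∨ y' + 2 ≤ y) : ¬ tAdj P t (x, y) (x', y') := by
  rintro (h' | h') <;> have := triRel_far _ _ _ _ h' <;> simp only at this <;> omega

lemma tAdj_not_anti {P : Finset (ℤ × ℤ)} {t : ℤ × ℤ → Bool} {x y x' y' : ℤ}
    (hx : x = x' + 1) (hy : y' = y + 1)
    (h : t (x', y) = true) : ¬ tAdj P t (x, y) (x', y') := by
  subst hx hy
  rintro (h' | h') <;> have := triRel_far _ _ _ _ h' <;> simp [h] at this <;> omega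

lemma tAdj_not_main {P : Finset (ℤ × ℤ)} {t : ℤ × ℤ → Bool} {x y x' y' : ℤ}
    (hx : x' = x + 1) (hy : y' = y + 1)
    (h : t (x, y) = false) : ¬ tAdj P t (x, y) (x', y') := by
  subst hx hy
  rintro (h' | h') <;> have := triRel_far _ _ _ _ h' <;> simp [h] at this <;> omega

lemma cell_facts {P : Finset (ℤ × ℤ)} {t : ℤ × ℤ → Bool} {x y x' y' : ℤ} (hc : (x, y) ∈ P)
    (hx : x' = x + 1) (hy : y' = y + 1) :
    (x, y) ∈ latticePts P ∧ (x', y) ∈ latticePts P ∧ (x, y') ∈ latticePts P ∧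
    (x', y') ∈ latticePts P ∧
    tAdj P t (x, y) (x', y) ∧ tAdj P t (x, y) (x, y') ∧ tAdj P t (x', y) (x', y') ∧
    tAdj P t (x, y') (x', y') ∧
    (t (x, y) = true → tAdj P t (x, y) (x', y') ∧ ¬ tAdj P t (x', y) (x, y')) ∧
    (t (x, y) = false → tAdj P t (x', y) (x, y') ∧ ¬ tAdj P t (x, y) (x', y')) := by
  refine ⟨⟨_, hc, ?_⟩, ⟨_, hc, ?_⟩, ⟨_, hc, ?_⟩, ⟨_, hc, ?_⟩, ?_, ?_, ?_, ?_,
    fun h => ⟨?_, tAdj_not_anti hx hy h⟩, fun h => ⟨?_, tAdj_not_main hx hy h⟩⟩ <;> subst hx hy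
  · simp
  · simp
  · simp
  · simp
  · left; left; simp [hc]
  · left; right; left; simp [hc]
  · left; right; left; simp [hc]
  · left; left; simp [hc]
  · left; right; right; exact ⟨_, hc, by simp [h]⟩
  · left; right; right; exact ⟨_, hc, by simp [h]⟩

set_option maxHeartbeats 4000000 in
lemma parity_aux {ι : Type*} {P : Finset (ℤ × ℤ)} {t : ℤ × ℤ → Bool} (n : ℤ × ℤ → ι → ℤ)
    (H : ∀ p ∈ latticePts P, ∀ q ∈ latticePts P, p ≠ q → (CloseFun (n p) (n q) ↔ tAdj P t p q))
    {x0 x1 x2 y0 y1 y2 : ℤ} (hx1 : x1 = x0 + 1) (hx2 : x2 = x1 + 1)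
    (hy1 : y1 = y0 + 1) (hy2 : y2 = y1 + 1)
    (h00 : (x0, y0) ∈ P) (h10 : (x1, y0) ∈ P) (h01 : (x0, y1) ∈ P) (h11 : (x1, y1) ∈ P) :
    xor (xor (t (x0, y0)) (t (x1, y0))) (xor (t (x0, y1)) (t (x1, y1))) = false := by
  obtain ⟨F, hF⟩ := close_iff_comparable n (x1, y1)
  obtain ⟨mSW, mS, mW, mO, rSWS, rSWW, aSO, aWO, d00, e00⟩ := cell_facts (t := t) h00 hx1 hy1
  obtain ⟨-, mSE, -, mE, rSSE, -, rSEE, aOE, d10, e10⟩ := cell_facts (t := t) h10 hx2 hy1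
  obtain ⟨-, -, mNW, mN, -, rWNW, aON, rNWN, d01, e01⟩ := cell_facts (t := t) h01 hx1 hy2
  obtain ⟨-, -, -, mNE, -, -, rENE, rNNE, d11, e11⟩ := cell_facts (t := t) h11 hx2 hy2
  have K : ∀ a b, (a ≠ (x1, y1) ∧ a ∈ latticePts P ∧ tAdj P t (x1, y1) a) →
      (b ≠ (x1, y1) ∧ b ∈ latticePts P ∧ tAdj P t (x1, y1) b) → a ≠ b →
      ((F a ≤ F b ∨ F b ≤ F a) ↔ tAdj P t a b) := by
    rintro a b ⟨a0, a1, a2⟩ ⟨b0, b1, b2⟩ hab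
    rw [← hF a b ((H _ mO _ a1 a0.symm).2 a2) ((H _ mO _ b1 b0.symm).2 b2), H _ a1 _ b1 hab]
  have Kp : ∀ a b, (a ≠ (x1, y1) ∧ a ∈ latticePts P ∧ tAdj P t (x1, y1) a) →
      (b ≠ (x1, y1) ∧ b ∈ latticePts P ∧ tAdj P t (x1, y1) b) → a ≠ b →
      (tAdj P t a b ∨ tAdj P t b a) → (F a ≤ F b ∨ F b ≤ F a) :=
    fun a b ha hb hab h => (K a b ha hb hab).2 (h.elim id tAdj_symm)
  have Kn : ∀ a b, (a ≠ (x1, y1) ∧ a ∈ latticePts P ∧ tAdj P t (x1, y1) a) →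
      (b ≠ (x1, y1) ∧ b ∈ latticePts P ∧ tAdj P t (x1, y1) b) → a ≠ b →
      (¬ tAdj P t a b ∨ ¬ tAdj P t b a) → ¬ (F a ≤ F b ∨ F b ≤ F a) :=
    fun a b ha hb hab h h' => h.elim (fun g => g ((K a b ha hb hab).1 h'))
      (fun g => g (tAdj_symm ((K a b ha hb hab).1 h')))
  have cS : ((x1, y0) : ℤ × ℤ) ≠ (x1, y1) ∧ (x1, y0) ∈ latticePts P ∧ tAdj P t (x1, y1) (x1, y0) :=
    ⟨by simp; omega, mS, tAdj_symm aSO⟩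
  have cW : ((x0, y1) : ℤ × ℤ) ≠ (x1, y1) ∧ (x0, y1) ∈ latticePts P ∧ tAdj P t (x1, y1) (x0, y1) :=
    ⟨by simp; omega, mW, tAdj_symm aWO⟩
  have cE : ((x2, y1) : ℤ × ℤ) ≠ (x1, y1) ∧ (x2, y1) ∈ latticePts P ∧ tAdj P t (x1, y1) (x2, y1) :=
    ⟨by simp; omega, mE, aOE⟩
  have cN : ((x1, y2) : ℤ × ℤ) ≠ (x1, y1) ∧ (x1, y2) ∈ latticePts P ∧ tAdj P t (x1, y1) (x1, y2) :=
    ⟨by simp; omega, mN, aON⟩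
  have cSW : t (x0, y0) = true → ((x0, y0) : ℤ × ℤ) ≠ (x1, y1) ∧ (x0, y0) ∈ latticePts P ∧
      tAdj P t (x1, y1) (x0, y0) := fun h => ⟨by simp; omega, mSW, tAdj_symm (d00 h).1⟩
  have cNE : t (x1, y1) = true → ((x2, y2) : ℤ × ℤ) ≠ (x1, y1) ∧ (x2, y2) ∈ latticePts P ∧
      tAdj P t (x1, y1) (x2, y2) := fun h => ⟨by simp; omega, mNE, (d11 h).1⟩
  have cSE : t (x1, y0) = false → ((x2, y0) : ℤ × ℤ) ≠ (x1, y1) ∧ (x2, y0) ∈ latticePts P ∧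
      tAdj P t (x1, y1) (x2, y0) := fun h => ⟨by simp; omega, mSE, tAdj_symm (e10 h).1⟩
  have cNW : t (x0, y1) = false → ((x0, y2) : ℤ × ℤ) ≠ (x1, y1) ∧ (x0, y2) ∈ latticePts P ∧
      tAdj P t (x1, y1) (x0, y2) := fun h => ⟨by simp; omega, mNW, (e01 h).1⟩
  have hlt : x0 < x1 ∧ x1 < x2 ∧ x0 < x2 ∧ y0 < y1 ∧ y1 < y2 ∧ y0 < y2 := by omega
  obtain ⟨l1, l2, l3, l4, l5, l6⟩ := hlt
  rcases b00 : t (x0, y0) with _ | _ <;> rcases b10 : t (x1, y0) with _ | _ <;>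
    rcases b01 : t (x0, y1) with _ | _ <;> rcases b11 : t (x1, y1) with _ | _ <;>
    (try rfl) <;> exfalso <;>
    simp only [b00, b10, b01, b11, forall_const, Bool.false_eq_true, Bool.true_eq_false, IsEmpty.forall_iff,
      reduceCtorEq] at d00 e00 d10 e10 d01 e01 d11 e11 cSW cNE cSE cNW
  · refine no_seven (fun a b => a ≤ b ∨ b ≤ a) (fun _ _ => Iff.rfl) (F (x1, y0)) (F (x2, y0)) (F (x2, y1)) (F (x2, y2)) (F (x1, y2)) (F (x0, y2)) (F (x0, y1)) ?_ ?_ ?_ ?_ ?_ ?_ ?_ ?_ ?_ ?_ ?_ ?_ ?_ ?_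
    all_goals first
      | exact Kp _ _ (by assumption) (by assumption) (by simp; omega) (by tauto)
      | exact Kn _ _ (by assumption) (by assumption) (by simp; omega) (Or.inl (tAdj_far_x (by omega)))
      | exact Kn _ _ (by assumption) (by assumption) (by simp; omega) (by tauto)
  · refine no_five (fun a b => a ≤ b ∨ b ≤ a) (fun _ _ => Iff.rfl) (F (x1, y0)) (F (x2, y0)) (F (x2, y1)) (F (x1, y2)) (F (x0, y1)) ?_ ?_ ?_ ?_ ?_ ?_ ?_ ?_ ?_ ?_
    all_goals first
      | exact Kp _ _ (by assumption) (by assumption) (by simp; omega) (by tauto)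
      | exact Kn _ _ (by assumption) (by assumption) (by simp; omega) (Or.inl (tAdj_far_x (by omega)))
      | exact Kn _ _ (by assumption) (by assumption) (by simp; omega) (by tauto)
  · refine no_five (fun a b => a ≤ b ∨ b ≤ a) (fun _ _ => Iff.rfl) (F (x1, y0)) (F (x2, y1)) (F (x1, y2)) (F (x0, y2)) (F (x0, y1)) ?_ ?_ ?_ ?_ ?_ ?_ ?_ ?_ ?_ ?_
    all_goals first
      | exact Kp _ _ (by assumption) (by assumption) (by simp; omega) (by tauto)
      | exact Kn _ _ (by assumption) (by assumption) (by simp; omega) (Or.inl (tAdj_far_x (by omega)))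
      | exact Kn _ _ (by assumption) (by assumption) (by simp; omega) (by tauto)
  · refine no_five (fun a b => a ≤ b ∨ b ≤ a) (fun _ _ => Iff.rfl) (F (x1, y0)) (F (x2, y1)) (F (x2, y2)) (F (x1, y2)) (F (x0, y1)) ?_ ?_ ?_ ?_ ?_ ?_ ?_ ?_ ?_ ?_
    all_goals first
      | exact Kp _ _ (by assumption) (by assumption) (by simp; omega) (by tauto)
      | exact Kn _ _ (by assumption) (by assumption) (by simp; omega) (Or.inl (tAdj_far_x (by omega)))
      | exact Kn _ _ (by assumption) (by assumption) (by simp; omega) (by tauto)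
  · refine no_seven (fun a b => a ≤ b ∨ b ≤ a) (fun _ _ => Iff.rfl) (F (x0, y0)) (F (x1, y0)) (F (x2, y0)) (F (x2, y1)) (F (x1, y2)) (F (x0, y2)) (F (x0, y1)) ?_ ?_ ?_ ?_ ?_ ?_ ?_ ?_ ?_ ?_ ?_ ?_ ?_ ?_
    all_goals first
      | exact Kp _ _ (by assumption) (by assumption) (by simp; omega) (by tauto)
      | exact Kn _ _ (by assumption) (by assumption) (by simp; omega) (Or.inl (tAdj_far_x (by omega)))
      | exact Kn _ _ (by assumption) (by assumption) (by simp; omega) (by tauto)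
  · refine no_seven (fun a b => a ≤ b ∨ b ≤ a) (fun _ _ => Iff.rfl) (F (x0, y0)) (F (x1, y0)) (F (x2, y0)) (F (x2, y1)) (F (x2, y2)) (F (x1, y2)) (F (x0, y1)) ?_ ?_ ?_ ?_ ?_ ?_ ?_ ?_ ?_ ?_ ?_ ?_ ?_ ?_
    all_goals first
      | exact Kp _ _ (by assumption) (by assumption) (by simp; omega) (by tauto)
      | exact Kn _ _ (by assumption) (by assumption) (by simp; omega) (Or.inl (tAdj_far_x (by omega)))
      | exact Kn _ _ (by assumption) (by assumption) (by simp; omega) (by tauto)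
  · refine no_seven (fun a b => a ≤ b ∨ b ≤ a) (fun _ _ => Iff.rfl) (F (x0, y0)) (F (x1, y0)) (F (x2, y1)) (F (x2, y2)) (F (x1, y2)) (F (x0, y2)) (F (x0, y1)) ?_ ?_ ?_ ?_ ?_ ?_ ?_ ?_ ?_ ?_ ?_ ?_ ?_ ?_
    all_goals first
      | exact Kp _ _ (by assumption) (by assumption) (by simp; omega) (by tauto)
      | exact Kn _ _ (by assumption) (by assumption) (by simp; omega) (Or.inl (tAdj_far_x (by omega)))
      | exact Kn _ _ (by assumption) (by assumption) (by simp; omega) (by tauto)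
  · refine no_five (fun a b => a ≤ b ∨ b ≤ a) (fun _ _ => Iff.rfl) (F (x0, y0)) (F (x1, y0)) (F (x2, y1)) (F (x1, y2)) (F (x0, y1)) ?_ ?_ ?_ ?_ ?_ ?_ ?_ ?_ ?_ ?_
    all_goals first
      | exact Kp _ _ (by assumption) (by assumption) (by simp; omega) (by tauto)
      | exact Kn _ _ (by assumption) (by assumption) (by simp; omega) (Or.inl (tAdj_far_x (by omega)))
      | exact Kn _ _ (by assumption) (by assumption) (by simp; omega) (by tauto)

lemma wordRep_parity {P : Finset (ℤ × ℤ)} {t : ℤ × ℤ → Bool} (hw : WordRepresentable (polyTri P t))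
    (x y : ℤ) (h00 : (x, y) ∈ P) (h10 : (x + 1, y) ∈ P) (h01 : (x, y + 1) ∈ P)
    (h11 : (x + 1, y + 1) ∈ P) :
    xor (xor (t (x, y)) (t (x + 1, y))) (xor (t (x, y + 1)) (t (x + 1, y + 1))) = false := by
  classical
  obtain ⟨w, -, hw⟩ := hw
  refine parity_aux (ι := ℕ) (P := P)
    (fun p => if h : p ∈ latticePts P then cnt w ⟨p, h⟩ else fun _ => 0) ?_
    rfl rfl rfl rfl h00 h10 h01 h11
  intro p hp q hq hpq
  have hne : (⟨p, hp⟩ : latticePts P) ≠ ⟨q, hq⟩ := fun h => hpq (congrArg Subtype.val h)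
  simp only [hp, hq, dif_pos]
  rw [← alternate_iff w _ _ hne, hw _ _ hne]
  simp [polyTri, tAdj, hpq]

/-! ### The parity condition implies 3-colorability -/

lemma const_of_step {M : Type*} [Inhabited M] (S : ℤ → Prop) (g : ℤ → M)
    (conv : ∀ a b x, S a → S b → a ≤ x → x ≤ b → S x)
    (step : ∀ x, S x → S (x + 1) → g (x + 1) = g x) : ∃ m, ∀ x, S x → g x = m := by
  have key : ∀ k : ℕ, ∀ x, S x → S (x + k) → g (x + k) = g x := by
    intro k
    induction k with
    | zero => intro x _ _; simp
    | succ k ih =>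
      intro x h1 h2
      have h3 : S (x + k) := conv x _ _ h1 h2 (by omega) (by push_cast; omega)
      rw [← ih x h1 h3]
      have e : x + ((k + 1 : ℕ) : ℤ) = x + k + 1 := by push_cast; ring
      rw [e] at h2 ⊢
      exact step _ h3 h2
  by_cases h : ∃ x0, S x0
  · obtain ⟨x0, h0⟩ := h
    refine ⟨g x0, fun x hx => ?_⟩
    rcases le_total x0 x with hl | hl
    · have e : x = x0 + ((x - x0).toNat : ℤ) := by omega
      rw [e] at hx ⊢
      exact key _ _ h0 hx
    · have e : x0 = x + ((x0 - x).toNat : ℤ) := by omega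
      rw [e] at h0 ⊢
      exact (key _ _ hx h0).symm
  · exact ⟨default, fun x hx => absurd ⟨x, hx⟩ h⟩

lemma exists_integral {M : Type*} [AddCommGroup M] (d : ℤ → M) :
    ∃ F : ℤ → M, ∀ y, F (y + 1) = F y + d y := by
  refine ⟨fun y => ∑ i ∈ Finset.Ico 0 y, d i - ∑ i ∈ Finset.Ico y 0, d i, fun y => ?_⟩
  rcases le_or_gt 0 y with h | h
  · have e : Finset.Ico 0 (y + 1) = insert y (Finset.Ico 0 y) := by
      ext z; simp; omega
    dsimp only
    rw [e, Finset.sum_insert (by simp)]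
    rw [Finset.Ico_eq_empty (a := y) (by omega), Finset.Ico_eq_empty (a := y + 1) (by omega)]
    simp [add_comm]
  · have e : Finset.Ico y 0 = insert y (Finset.Ico (y + 1) 0) := by
      ext z; simp; omega
    dsimp only
    rw [e, Finset.sum_insert (by simp)]
    rw [Finset.Ico_eq_empty (a := 0) (b := y) (by omega),
      Finset.Ico_eq_empty (a := 0) (b := y + 1) (by omega)]
    simp

lemma colorable_of_parity {P : Finset (ℤ × ℤ)} {t : ℤ × ℤ → Bool}
    (hcol : ∀ x y₁ y₂ y : ℤ, (x, y₁) ∈ P → (x, y₂) ∈ P → y₁ ≤ y → y ≤ y₂ → (x, y) ∈ P)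
    (hrow : ∀ y x₁ x₂ x : ℤ, (x₁, y) ∈ P → (x₂, y) ∈ P → x₁ ≤ x → x ≤ x₂ → (x, y) ∈ P)
    (hpar : ∀ x y, (x, y) ∈ P → (x + 1, y) ∈ P → (x, y + 1) ∈ P → (x + 1, y + 1) ∈ P →
      xor (xor (t (x, y)) (t (x + 1, y))) (xor (t (x, y + 1)) (t (x + 1, y + 1))) = false) :
    (polyTri P t).Colorable 3 := by
  let τ : ℤ × ℤ → ZMod 2 := fun p => if t p then 1 else 0
  have h1 : ∀ y, ∃ d : ZMod 2, ∀ x, ((x, y) ∈ P ∧ (x, y + 1) ∈ P) →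
      τ (x, y + 1) - τ (x, y) = d := by
    intro y
    refine const_of_step (fun x => (x, y) ∈ P ∧ (x, y + 1) ∈ P)
      (fun x => τ (x, y + 1) - τ (x, y)) ?_ ?_
    · intro a b x ha hb h1 h2
      exact ⟨hrow _ _ _ _ ha.1 hb.1 h1 h2, hrow _ _ _ _ ha.2 hb.2 h1 h2⟩
    · intro x ha hb
      have := hpar x y ha.1 hb.1 ha.2 hb.2
      simp only [τ]
      revert this
      generalize t (x, y) = a
      generalize t (x + 1, y) = b
      generalize t (x, y + 1) = c
      generalize t (x + 1, y + 1) = d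
      revert a b c d
      decide
  choose δ hδ using h1
  obtain ⟨β, hβ⟩ := exists_integral δ
  have h2 : ∀ x, ∃ m : ZMod 2, ∀ y, (x, y) ∈ P → τ (x, y) - β y = m := by
    intro x
    refine const_of_step (fun y => (x, y) ∈ P) (fun y => τ (x, y) - β y) (hcol x) ?_
    intro y ha hb
    rw [hβ, ← hδ y x ⟨ha, hb⟩]
    ring
  choose α hα using h2
  let σ : ZMod 2 → ZMod 3 := fun a => if a = 0 then 1 else -1
  obtain ⟨A, hA⟩ := exists_integral (fun x => σ (α x))
  obtain ⟨B, hB⟩ := exists_integral (fun y => - σ (β y))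
  have hσ : ∀ a, σ a ≠ 0 := by decide
  have hval : ∀ p q, triRel P t p q → A p.1 + B p.2 ≠ A q.1 + B q.2 := by
    rintro ⟨x, y⟩ q (⟨rfl, -⟩ | ⟨rfl, -⟩ | ⟨⟨u, v⟩, hc, ⟨ht, h1, h2⟩ | ⟨ht, h1, h2⟩⟩)
    · intro h
      simp only [hA] at h
      apply hσ (α x)
      linear_combination -h
    · intro h
      simp only [hB] at h
      apply hσ (β y)
      linear_combination h
    · obtain ⟨rfl, rfl⟩ := Prod.mk.inj h1
      subst h2
      have e := hα _ _ hc
      simp only [τ, ht, if_true] at e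
      intro h
      simp only [hA, hB] at h
      have h' : σ (α x) = σ (β y) := by linear_combination -h
      rw [← e] at h'
      generalize β y = b at h'
      revert b
      decide
    · obtain ⟨rfl, rfl⟩ := Prod.mk.inj h1
      subst h2
      have e := hα _ _ hc
      simp only [τ, ht] at e
      intro h
      simp only [hA, hB] at h
      have h' : σ (α u) = - σ (β y) := by linear_combination h
      rw [← e] at h'
      generalize β y = b at h'
      revert b
      decide
  refine ⟨SimpleGraph.Coloring.mk (fun p => (A p.1.1 + B p.1.2 : ZMod 3)) ?_⟩
  rintro ⟨p, hp⟩ ⟨q, hq⟩ h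
  simp only [polyTri, SimpleGraph.comap_adj, SimpleGraph.fromRel_adj] at h
  rcases h.2 with h | h
  · exact hval _ _ h
  · exact (hval _ _ h).symm

/-! ### 3-colorable graphs are word-representable -/

lemma filter_nil_of {V : Type*} [DecidableEq V] (L : List V) (p : V → Bool) (u v : V)
    (hu : p u = false) (hv : p v = false) :
    (L.filter p).filter (fun z => z = u ∨ z = v) = [] := by
  rw [List.filter_filter, List.filter_eq_nil_iff]
  rintro a - h
  simp only [Bool.and_eq_true, decide_eq_true_eq] at h
  rcases h with ⟨rfl | rfl, h⟩ <;> simp_all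

lemma filter_left_of {V : Type*} [DecidableEq V] (L : List V) (hL : L.Nodup) (hm : ∀ a, a ∈ L)
    (p : V → Bool) (u v : V) (hu : p u = true) (hv : p v = false) :
    (L.filter p).filter (fun z => z = u ∨ z = v) = [u] := by
  have : (L.filter p).filter (fun z => z = u ∨ z = v) = L.filter (fun z => z == u) := by
    rw [List.filter_filter]
    apply List.filter_congr
    intro a _
    by_cases h1 : a = u
    · subst h1; simp [hu]
    · by_cases h2 : a = v
      · subst h2; simp [h1, hv]
      · simp [h1, h2]
  rw [this, List.filter_beq, List.count_eq_one_of_mem hL (hm u)]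
  rfl

lemma filter_right_of {V : Type*} [DecidableEq V] (L : List V) (hL : L.Nodup) (hm : ∀ a, a ∈ L)
    (p : V → Bool) (u v : V) (hu : p u = false) (hv : p v = true) :
    (L.filter p).filter (fun z => z = u ∨ z = v) = [v] := by
  rw [← filter_left_of L hL hm p v u hv hu]
  congr 1
  funext z
  simp [or_comm]

/-- The trace of a piece on a pair of letters not both in the piece. -/
lemma filter_piece {V : Type*} [DecidableEq V] (L : List V) (hL : L.Nodup) (hm : ∀ a, a ∈ L)
    (p : V → Bool) (u v : V) (h : ¬ (p u = true ∧ p v = true)) :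
    (L.filter p).filter (fun z => z = u ∨ z = v) =
      if p u then [u] else if p v then [v] else [] := by
  rcases hu : p u with _ | _ <;> rcases hv : p v with _ | _
  · simpa using filter_nil_of L p u v hu hv
  · simpa using filter_right_of L hL hm p u v hu hv
  · simpa using filter_left_of L hL hm p u v hu hv
  · exact absurd ⟨hu, hv⟩ h

/-- The restriction of `l` to `{u, v}` is `uvuv...uv`. -/
def GoodFor {V : Type*} [DecidableEq V] (u v : V) (l : List V) : Prop :=
  ∃ k : ℕ, l.filter (fun z => z = u ∨ z = v) = (List.replicate k [u, v]).flatten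

lemma GoodFor.append {V : Type*} [DecidableEq V] {u v : V} {l m : List V}
    (h1 : GoodFor u v l) (h2 : GoodFor u v m) : GoodFor u v (l ++ m) := by
  obtain ⟨k, hk⟩ := h1
  obtain ⟨k', hk'⟩ := h2
  refine ⟨k + k', ?_⟩
  rw [List.filter_append, hk, hk', List.replicate_add, List.flatten_append]

lemma GoodFor.flatMap {V : Type*} [DecidableEq V] {u v : V} (L : List V) (T : V → List V)
    (h : ∀ x, GoodFor u v (T x)) : GoodFor u v (L.flatMap T) := by
  induction L with
  | nil => exact ⟨0, rfl⟩
  | cons a L ih => rw [List.flatMap_cons]; exact (h a).append ih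

lemma GoodFor.alternate {V : Type*} [DecidableEq V] {u v : V} (huv : u ≠ v) {l : List V}
    (h : GoodFor u v l) : Alternate l u v := by
  obtain ⟨k, hk⟩ := h
  change (l.filter (fun z => z = u ∨ z = v)).IsChain (· ≠ ·)
  rw [hk]
  have : ∀ k : ℕ, (v :: (List.replicate k [u, v]).flatten).IsChain (· ≠ ·) := by
    intro k
    induction k with
    | zero => simp
    | succ k ih =>
      rw [List.replicate_succ, List.flatten_cons]
      simp only [List.cons_append, List.nil_append, List.isChain_cons_cons]
      exact ⟨huv.symm, huv, ih⟩
  exact (this k).tail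


/-- Colour classes in order, with `x` first in its class. -/
def word1 {V : Type*} [DecidableEq V] (L : List V) (c : V → ℕ) (x : V) : List V :=
  L.filter (fun z => c z = 0 ∧ 0 < c x) ++ L.filter (fun z => c z = 1 ∧ 1 < c x) ++
  L.filter (fun z => z = x) ++
  L.filter (fun z => c z = c x ∧ z ≠ x) ++
  L.filter (fun z => c z = c x + 1) ++ L.filter (fun z => c z = c x + 2)

/-- Colour classes in order, with `x` moved behind its nonneighbours in the next class. -/
def word2 {V : Type*} [DecidableEq V] (L : List V) (c : V → ℕ) (G : V → V → Bool) (x : V) :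
    List V :=
  L.filter (fun z => c z = 0 ∧ 0 < c x) ++ L.filter (fun z => c z = 1 ∧ 1 < c x) ++
  L.filter (fun z => c z = c x ∧ z ≠ x) ++
  L.filter (fun z => c z = c x + 1 ∧ G x z = false) ++ L.filter (fun z => z = x) ++
  L.filter (fun z => c z = c x + 1 ∧ G x z = true) ++ L.filter (fun z => c z = c x + 2)

/-- A 2-uniform word separating `x` of colour `0` from its nonneighbours of colour `2`. -/
def word3 {V : Type*} [DecidableEq V] (L : List V) (c : V → ℕ) (G : V → V → Bool) (x : V) :
    List V :=
    L.filter (fun z => c z = 0) ++ L.filter (fun z => c z = 1) ++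
    L.filter (fun z => c z = 2 ∧ G x z = true) ++ L.filter (fun z => z = x) ++
    L.filter (fun z => c z = 2 ∧ G x z = false) ++
    L.filter (fun z => c z = 0 ∧ z ≠ x) ++ L.filter (fun z => c z = 1) ++
    L.filter (fun z => c z = 2)

lemma word1_good {V : Type*} [DecidableEq V] (L : List V) (c : V → ℕ)
    (hL : L.Nodup) (hm : ∀ a, a ∈ L) (hc : ∀ a, c a < 3) (x u v : V) (huv : c u < c v) :
    GoodFor u v (word1 L c x) := by
  have hne : u ≠ v := by rintro rfl; omega
  have := hc u; have := hc v; have := hc x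
  refine ⟨1, ?_⟩
  have fp := fun p => filter_piece L hL hm p u v
  simp only [word1, List.filter_append]
  rw [fp, fp, fp, fp, fp, fp]
  all_goals simp only [decide_eq_true_eq]
  · clear fp
    have hne' := hne.symm
    have hcu : c u = 0 ∨ c u = 1 := by omega
    have hcv : c v = 1 ∨ c v = 2 := by omega
    have hcx : c x = 0 ∨ c x = 1 ∨ c x = 2 := by omega
    by_cases h1 : u = x
    · subst h1
      rcases hcu with hcu | hcu <;> rcases hcv with hcv | hcv <;>
        first
        | omega
        | simp [hcu, hcv, hne, hne']
    · by_cases h2 : v = x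
      · subst h2
        rcases hcu with hcu | hcu <;> rcases hcv with hcv | hcv <;>
          first
          | omega
          | simp [hcu, hcv, hne, hne']
      · rcases hcu with hcu | hcu <;> rcases hcv with hcv | hcv <;>
          rcases hcx with hcx | hcx | hcx <;> first
          | omega
          | (simp [hcu, hcv, hcx, h1, h2])
  all_goals grind

lemma word2_good {V : Type*} [DecidableEq V] (L : List V) (c : V → ℕ) (G : V → V → Bool)
    (hL : L.Nodup) (hm : ∀ a, a ∈ L) (hc : ∀ a, c a < 3) (x u v : V) (huv : c u < c v)
    (hG : G u v = true) :
    GoodFor u v (word2 L c G x) := by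
  have hne : u ≠ v := by rintro rfl; omega
  have := hc u; have := hc v; have := hc x
  refine ⟨1, ?_⟩
  have fp := fun p => filter_piece L hL hm p u v
  simp only [word2, List.filter_append]
  rw [fp, fp, fp, fp, fp, fp, fp]
  all_goals simp only [decide_eq_true_eq]
  · clear fp
    have hne' := hne.symm
    have hcu : c u = 0 ∨ c u = 1 := by omega
    have hcv : c v = 1 ∨ c v = 2 := by omega
    have hcx : c x = 0 ∨ c x = 1 ∨ c x = 2 := by omega
    by_cases h1 : u = x
    · subst h1
      rcases hcu with hcu | hcu <;> rcases hcv with hcv | hcv <;>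
        first
        | omega
        | simp [hcu, hcv, hne, hne', hG]
    · by_cases h2 : v = x
      · subst h2
        rcases hcu with hcu | hcu <;> rcases hcv with hcv | hcv <;>
          first
          | omega
          | simp [hcu, hcv, hne, hne', hG]
      · rcases hcu with hcu | hcu <;> rcases hcv with hcv | hcv <;>
          rcases hcx with hcx | hcx | hcx <;> rcases g1 : G x u <;> rcases g2 : G x v <;> first
          | omega
          | (simp [hcu, hcv, hcx, h1, h2, g1, g2])
  all_goals grind

lemma word3_good {V : Type*} [DecidableEq V] (L : List V) (c : V → ℕ) (G : V → V → Bool)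
    (hL : L.Nodup) (hm : ∀ a, a ∈ L) (hc : ∀ a, c a < 3) (x u v : V) (hx : c x = 0)
    (huv : c u < c v) (hG : G u v = true) :
    GoodFor u v (word3 L c G x) := by
  have hne : u ≠ v := by rintro rfl; omega
  have := hc u; have := hc v
  refine ⟨2, ?_⟩
  have fp := fun p => filter_piece L hL hm p u v
  simp only [word3, List.filter_append]
  rw [fp, fp, fp, fp, fp, fp, fp]
  all_goals simp only [decide_eq_true_eq]
  · clear fp
    have hne' := hne.symm
    have hcu : c u = 0 ∨ c u = 1 := by omega
    have hcv : c v = 1 ∨ c v = 2 := by omega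
    by_cases h1 : u = x
    · subst h1
      rcases hcu with hcu | hcu <;> rcases hcv with hcv | hcv <;>
        first
        | omega
        | simp [hcu, hcv, hne, hne', hG, hx]
    · by_cases h2 : v = x
      · subst h2
        rcases hcu with hcu | hcu <;> rcases hcv with hcv | hcv <;>
          first
          | omega
          | simp [hcu, hcv, hne, hne', hG, hx]
      · rcases hcu with hcu | hcu <;> rcases hcv with hcv | hcv <;>
          first
          | omega
          | (rcases g1 : G x u <;> rcases g2 : G x v <;> simp [hcu, hcv, h1, h2, g1, g2])
  all_goals grind

lemma word12_bad {V : Type*} [DecidableEq V] (L : List V) (c : V → ℕ) (G : V → V → Bool)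
    (hL : L.Nodup) (hm : ∀ a, a ∈ L) (x y : V) (hxy : x ≠ y)
    (h : c y = c x ∨ c y = c x + 1) (hG : G x y = false) :
    (word1 L c x ++ word2 L c G x).filter (fun z => z = x ∨ z = y) = [x, y, y, x] := by
  have fp := fun p => filter_piece L hL hm p x y
  simp only [word1, word2, List.filter_append]
  rw [fp, fp, fp, fp, fp, fp, fp, fp]
  all_goals simp only [decide_eq_true_eq]
  · clear fp
    have hne' := hxy.symm
    rcases h with h | h <;> rcases hcx : c x with _ | _ | k <;>
      rw [hcx] at h <;> simp [h, hne', hG]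
  all_goals grind

lemma word3_bad {V : Type*} [DecidableEq V] (L : List V) (c : V → ℕ) (G : V → V → Bool)
    (hL : L.Nodup) (hm : ∀ a, a ∈ L) (x y : V) (hxy : x ≠ y)
    (hx : c x = 0) (hy : c y = 2) (hG : G x y = false) :
    (word3 L c G x).filter (fun z => z = x ∨ z = y) = [x, x, y, y] := by
  have fp := fun p => filter_piece L hL hm p x y
  simp only [word3, List.filter_append]
  rw [fp, fp, fp, fp, fp, fp, fp]
  all_goals simp only [decide_eq_true_eq]
  all_goals grind

lemma alternate_comm {V : Type*} [DecidableEq V] (w : List V) (x y : V) :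
    Alternate w x y ↔ Alternate w y x := by
  have hsw : w.filter (fun z => z = x ∨ z = y) = w.filter (fun z => z = y ∨ z = x) := by
    congr 1; funext z; simp [or_comm]
  unfold Alternate
  rw [hsw]

lemma not_alternate_of_infix {V : Type*} [DecidableEq V] {w m : List V} {x y : V}
    (hi : m <:+: w)
    (hm : ¬ (m.filter (fun z => z = x ∨ z = y)).IsChain (· ≠ ·)) : ¬ Alternate w x y := by
  intro h
  exact hm (List.IsChain.infix h (hi.filter _))

lemma wordRep_of_colorable {V : Type*} [DecidableEq V] [Finite V] (G : SimpleGraph V)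
    (h : G.Colorable 3) : WordRepresentable G := by
  classical
  obtain ⟨C⟩ := h
  have : Fintype V := Fintype.ofFinite V
  let L : List V := Finset.univ.toList
  have hL : L.Nodup := Finset.nodup_toList _
  have hm : ∀ a, a ∈ L := fun a => by simp [L]
  let c : V → ℕ := fun a => (C a).val
  have hc : ∀ a, c a < 3 := fun a => (C a).isLt
  let g : V → V → Bool := fun a b => decide (G.Adj a b)
  let T : V → List V := fun x => (word1 L c x ++ word2 L c g x) ++
    (if c x = 0 then word3 L c g x else [])
  have hsub : ∀ x, T x <:+: L.flatMap T := fun x => by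
    obtain ⟨L1, L2, hL12⟩ := List.append_of_mem (hm x)
    rw [hL12, List.flatMap_append, List.flatMap_cons]
    exact ⟨L1.flatMap T, L2.flatMap T, by simp⟩
  have hE : ∀ u v, c u < c v → G.Adj u v → Alternate (L.flatMap T) u v := by
    intro u v huv ha
    have hg : g u v = true := by simp [g, ha]
    apply GoodFor.alternate ha.ne
    apply GoodFor.flatMap
    intro x
    refine ((word1_good L c hL hm hc x u v huv).append
      (word2_good L c g hL hm hc x u v huv hg)).append ?_
    split_ifs with hx
    · exact word3_good L c g hL hm hc x u v hx huv hg
    · exact ⟨0, rfl⟩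
  have hN : ∀ x y, c x ≤ c y → x ≠ y → ¬ G.Adj x y → ¬ Alternate (L.flatMap T) x y := by
    intro x y hxy hne ha
    have hg : g x y = false := by simp [g, ha]
    have hy := hc y
    by_cases h : c y = c x ∨ c y = c x + 1
    · refine not_alternate_of_infix (m := word1 L c x ++ word2 L c g x)
        (List.IsInfix.trans ?_ (hsub x)) ?_
      · exact (List.prefix_append _ _).isInfix
      · rw [word12_bad L c g hL hm x y hne h hg]
        simp
    · have hx0 : c x = 0 := by omega
      have hy2 : c y = 2 := by omega
      refine not_alternate_of_infix (m := word3 L c g x)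
        (List.IsInfix.trans ?_ (hsub x)) ?_
      · simp only [T, if_pos hx0]
        exact (List.suffix_append _ _).isInfix
      · rw [word3_bad L c g hL hm x y hne hx0 hy2 hg]
        simp
  refine ⟨L.flatMap T, fun v => ?_, fun x y hne => ⟨fun h => ?_, fun h => ?_⟩⟩
  · refine List.mem_flatMap.2 ⟨v, hm v, ?_⟩
    simp [T, word1, hm]
  · by_contra ha
    rcases le_total (c x) (c y) with hl | hl
    · exact hN x y hl hne ha h
    · exact hN y x hl hne.symm (fun h' => ha h'.symm) ((alternate_comm _ _ _).1 h)
  · have hcne : c x ≠ c y := fun h' => C.valid h (Fin.ext h')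
    rcases lt_or_gt_of_ne hcne with hl | hl
    · exact hE x y hl h
    · exact (alternate_comm _ _ _).1 (hE y x hl h.symm)

lemma latticePts_finite (P : Finset (ℤ × ℤ)) : (latticePts P).Finite := by
  refine Set.Finite.subset (P.finite_toSet.biUnion (t := fun c =>
    ({c, (c.1 + 1, c.2), (c.1, c.2 + 1), (c.1 + 1, c.2 + 1)} : Set (ℤ × ℤ)))
    (fun c _ => Set.toFinite _)) ?_
  rintro p ⟨c, hc, h⟩
  simp only [Set.mem_iUnion]
  exact ⟨c, hc, by simpa using h⟩

/-- Any triangulation of the graph associated with a convex polyomino is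
word-representable if and only if it is 3-colorable. -/
theorem polyomino_tri_word_representable_iff_three_colorable
    (P : Finset (ℤ × ℤ)) (hP : IsConvexPolyomino P) (t : ℤ × ℤ → Bool) :
    WordRepresentable (polyTri P t) ↔ (polyTri P t).Colorable 3 := by
  constructor
  · intro hw
    exact colorable_of_parity hP.2.1 hP.2.2 (wordRep_parity hw)
  · intro h
    have : Finite (latticePts P) := (latticePts_finite P).to_subtype
    exact wordRep_of_colorable _ h
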